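/- Let F : T → T be a polynomial-like branched covering of a simplicial tree, let J(F) = ∂T ∖ {∞} with the subspace topology from the space of ends, and let μ_F be the unique Borel probability measure on J(F) with μ_F(J(F,v)) = μ(v) for every vertex v, which is invariant under the induced boundary map F : J(F) → J(F). Then the measure-preserving system (F, J(F), μ_F) is ergodic: every Borel set A ⊆ J(F) with F^{−1}(A) = A has μ_F(A) ∈ {0, 1}. -/

import Mathlib

open SimpleGraph Function Opposite

/-- A locally finite simplicial tree together with a self-map that is a
branched covering: a simplicial map (edges map onto edges) such that the
induced map on edges adjacent to any vertex is surjective onto the edges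
adjacent to the image vertex, and every vertex has finitely many preimages. -/
structure TreeDyn (V : Type) where
  G : SimpleGraph V
  isTree : G.IsTree
  locFin : ∀ v : V, (G.neighborSet v).Finite
  F : V → V
  adjMap : ∀ ⦃v w : V⦄, G.Adj v w → G.Adj (F v) (F w)
  edgeSurj : ∀ ⦃v w' : V⦄, G.Adj (F v) w' → ∃ w : V, G.Adj v w ∧ F w = w'
  finFibers : ∀ v' : V, {v : V | F v = v'}.Finite

namespace TreeDyn

variable {V : Type}

/-- A local degree function for the branched covering `T.F`: positive on
vertices and edges (edges adjacent to `v` are recorded by their other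
endpoint), symmetric on edges, satisfying the Riemann–Hurwitz style
inequality `2 deg(v) - 2 ≥ Σ (deg e - 1)` at each vertex, and the local
equality `deg v = Σ {deg e' : e' adjacent to v, F(e') = F(e)}` for each
edge `e` adjacent to `v`. -/
def IsLocalDeg (T : TreeDyn V) (dV : V → ℕ) (dE : V → V → ℕ) : Prop :=
  (∀ v w : V, dE v w = dE w v) ∧
  (∀ v : V, 0 < dV v) ∧
  (∀ ⦃v w : V⦄, T.G.Adj v w → 0 < dE v w) ∧
  (∀ v : V, (∑ᶠ w ∈ T.G.neighborSet v, (dE v w - 1)) + 2 ≤ 2 * dV v) ∧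
  (∀ ⦃v w : V⦄, T.G.Adj v w →
    dV v = ∑ᶠ w' ∈ {w' : V | T.G.Adj v w' ∧ T.F w' = T.F w}, dE v w')

/-- `x` and `y` are in the same grand orbit if `F^[n] x = F^[m] y` for some `n, m > 0`. -/
def GrandOrbit (T : TreeDyn V) (x y : V) : Prop :=
  ∃ n m : ℕ, 0 < n ∧ 0 < m ∧ T.F^[n] x = T.F^[m] y

end TreeDyn

/-- The natural topology on the space of ends of a graph: the subspace
topology induced from the product of the (discrete) spaces of components
of complements of finite sets. -/
def endTop {V : Type} (G : SimpleGraph V) : TopologicalSpace G.end :=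
  TopologicalSpace.induced Subtype.val
    (⨅ K : (Finset V)ᵒᵖ, TopologicalSpace.induced (fun f => f K) ⊥)

/-- An end is isolated if it is an isolated point of the space of ends. -/
def IsIsolatedEnd {V : Type} (G : SimpleGraph V) (e : G.end) : Prop :=
  @IsOpen G.end (endTop G) {e}

namespace TreeDyn

variable {V : Type}

/-- `T` is polynomial-like with distinguished end `infty`:
(II) a local degree function exists, (I) `infty` is the unique isolated end,
(III) no vertex has valence one, and (IV) the grand orbit of every vertex
contains a vertex of valence at least three. -/
def IsPolyLike (T : TreeDyn V) (infty : T.G.end) : Prop :=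
  (∃ dV dE, T.IsLocalDeg dV dE) ∧
  IsIsolatedEnd T.G infty ∧
  (∀ e : T.G.end, IsIsolatedEnd T.G e → e = infty) ∧
  (∀ v : V, (T.G.neighborSet v).ncard ≠ 1) ∧
  (∀ v : V, ∃ w : V, T.GrandOrbit v w ∧ 3 ≤ (T.G.neighborSet w).ncard)

/-- The vertex `x` lies below the vertex `v` (the path from `x` to the
end `infty` passes through `v`): either `x = v`, or `x` and `infty`
determine different components of the complement of `{v}`. -/
def Below (T : TreeDyn V) (infty : T.G.end) (v x : V) : Prop :=
  x = v ∨ ∃ h : x ∉ (({v} : Finset V) : Set V),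
    T.G.componentComplMk h ≠ infty.val (op ({v} : Finset V))

/-- The end `p` lies below the vertex `v` (the path from `p` to `infty`
passes through `v`). -/
def EndBelow (T : TreeDyn V) (infty : T.G.end) (v : V) (p : T.G.end) : Prop :=
  p.val (op ({v} : Finset V)) ≠ infty.val (op ({v} : Finset V))

/-- `v₀` is the base of the tree: the vertex of valence ≥ 3 closest to
`infty`, i.e. every vertex of valence ≥ 3 lies below it. -/
def IsBase (T : TreeDyn V) (infty : T.G.end) (v₀ : V) : Prop :=
  3 ≤ (T.G.neighborSet v₀).ncard ∧
  ∀ w : V, 3 ≤ (T.G.neighborSet w).ncard → T.Below infty v₀ w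

open Classical in
/-- The combinatorial height relative to the base `v₀`: `|h v|` is the
graph distance to `v₀`, with `h v ≥ 0` exactly when `v` lies on the ray
from `v₀` to `infty` (i.e. `v₀` lies below `v`). -/
noncomputable def height (T : TreeDyn V) (infty : T.G.end) (v₀ : V) (v : V) : ℤ :=
  if T.Below infty v v₀ then (T.G.dist v₀ v : ℤ) else -(T.G.dist v₀ v : ℤ)

/-- `Dg` is the global degree of `T.F`: for every edge `{v,w}`, the sum of
the degrees of the edges mapping onto it equals `Dg`. -/
def IsGlobalDeg (T : TreeDyn V) (dE : V → V → ℕ) (Dg : ℕ) : Prop :=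
  ∀ ⦃v w : V⦄, T.G.Adj v w →
    Dg = ∑ᶠ a ∈ {a : V | T.F a = v}, ∑ᶠ b ∈ {b : V | T.G.Adj a b ∧ T.F b = w}, dE a b

/-- The critical multiplicity of a vertex. -/
noncomputable def multV (T : TreeDyn V) (dV : V → ℕ) (dE : V → V → ℕ) (v : V) : ℕ :=
  2 * dV v - 2 - ∑ᶠ w ∈ T.G.neighborSet v, (dE v w - 1)

/-- The critical multiplicity of an end `p ≠ infty`: the limiting
(= minimal) value of `dV` along the path from `infty` to `p`, minus one. -/
noncomputable def multEnd (T : TreeDyn V) (infty : T.G.end) (dV : V → ℕ) (p : T.G.end) : ℕ :=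
  sInf {d : ℕ | ∃ v : V, T.EndBelow infty v p ∧ dV v = d} - 1

/-- `μ` is the mass function: `μ v = 1` for `h(v) ≥ 0` and
`μ(F v) = (deg F / deg v) · μ v`. -/
def IsMass (T : TreeDyn V) (infty : T.G.end) (v₀ : V) (dV : V → ℕ) (Dg : ℕ)
    (μ : V → ℚ) : Prop :=
  (∀ v : V, 0 ≤ T.height infty v₀ v → μ v = 1) ∧
  (∀ v : V, μ (T.F v) = ((Dg : ℚ) / (dV v : ℚ)) * μ v)

end TreeDyn

/-- The Julia set of `T`: the set of ends other than `infty`. -/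
def JSet {V : Type} (T : TreeDyn V) (infty : T.G.end) : Type :=
  {p : T.G.end // p ≠ infty}

/-- The topology on the Julia set, induced from the topology on ends. -/
noncomputable def JTop {V : Type} (T : TreeDyn V) (infty : T.G.end) :
    TopologicalSpace (JSet T infty) :=
  TopologicalSpace.induced Subtype.val (endTop T.G)

/-- The Borel σ-algebra on the Julia set. -/
noncomputable def JBorel {V : Type} (T : TreeDyn V) (infty : T.G.end) :
    MeasurableSpace (JSet T infty) :=
  @borel (JSet T infty) (JTop T infty)

/-!
An end `p` of a tree is the same thing as an orientation of the edges towards `p`. Orient them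
towards `infty`, so that every vertex has a parent, and the Julia set is covered by the cylinders
`J(F, v)`, nested according to ancestry. The map `F` preserves parents: an edge whose orientation it
reverses would have below it a chain of only children, that is, an isolated end other than `infty`.
By the degree formula, the boundary map then carries `ν` on `J(F, v)` to `deg v / deg F` times `ν`
on `J(F, F v)`. Hence, for an invariant set `A`, the conditional measures of `A` in `J(F, v)` and in
`J(F, F v)` agree. As `F` raises levels, some iterate of `v` lies on the ray above the base, where
the cylinders have full measure. So `A` is independent of every cylinder, hence of itself.
-/

open MeasureTheory in
theorem measure_eq_zero_or_one_of_forall_inter_eq_mul {α : Type*} {m : MeasurableSpace α}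
    {ν : Measure α} [IsProbabilityMeasure ν] {C : Set (Set α)}
    (hgen : m = MeasurableSpace.generateFrom C) (hC : IsPiSystem C) {A : Set α}
    (h : ∀ s ∈ C, ν (s ∩ A) = ν s * ν A) : ν A = 0 ∨ ν A = 1 := by
  have hext : ν.restrict A = ν A • ν := by
    refine ext_of_generate_finite C hgen hC (fun s hs => ?_) (by simp)
    have hs' : MeasurableSet s := hgen ▸ MeasurableSpace.measurableSet_generateFrom hs
    rw [Measure.restrict_apply hs', h s hs, Measure.smul_apply, smul_eq_mul, mul_comm]
  have hsq : ν A = ν A * ν A := by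
    simpa using congrArg (fun m => m A) hext
  exact or_iff_not_imp_left.2 fun h0 => (ENNReal.mul_eq_left h0 (measure_ne_top ν A)).1 hsq.symm

namespace TreeEnd

variable {V : Type*} {G : SimpleGraph V}

section Components

variable {K : Set V} {C : G.ComponentCompl K} {x y : V}

theorem mem_of_walk_avoiding (hx : x ∈ C) (π : G.Walk x y) (hπ : ∀ z ∈ π.support, z ∉ K) :
    y ∈ C := by
  obtain ⟨hxK, rfl⟩ := hx
  exact ⟨hπ y π.end_mem_support, (ConnectedComponent.sound ⟨π.induce Kᶜ hπ⟩).symm⟩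

theorem notMem_of_mem_support_of_isPath (hG : G.IsAcyclic) (hx : x ∈ C) (hy : y ∈ C)
    {π : G.Walk x y} (hπ : π.IsPath) {z : V} (hz : z ∈ π.support) : z ∉ K := by
  classical
  obtain ⟨hxK, rfl⟩ := hx
  obtain ⟨hyK, hyx⟩ := hy
  obtain ⟨w⟩ := ConnectedComponent.exact hyx.symm
  let w' : G.Walk x y := w.map (Embedding.induce Kᶜ).toHom
  have hπw : π = w'.bypass :=
    congrArg Subtype.val ((hG.subsingleton_path x y).elim ⟨π, hπ⟩ w'.toPath)
  have hzw : z ∈ w'.support := w'.support_bypass_subset_support (hπw ▸ hz)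
  obtain ⟨a, -, rfl⟩ := List.mem_map.1 (Walk.support_map _ w ▸ hzw)
  exact a.2

theorem mem_iff_of_isPath (hG : G.IsAcyclic) (hx : x ∈ C) {π : G.Walk x y} (hπ : π.IsPath) :
    y ∈ C ↔ ∀ z ∈ π.support, z ∉ K :=
  ⟨fun hy _ => notMem_of_mem_support_of_isPath hG hx hy hπ, mem_of_walk_avoiding hx π⟩

end Components

section Component

variable {p q : G.end} {K L : Finset V} {v w x : V}

/-- The component of the complement of the finite set `K` in which the end `p` lies. -/
def component (p : G.end) (K : Finset V) : G.ComponentCompl (K : Set V) := p.val (op K)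

theorem component_subset (p : G.end) (h : K ⊆ L) :
    (component p L : Set V) ⊆ component p K := by
  have hsec : (component p L).hom (Finset.coe_subset.2 h) = component p K :=
    p.2 (CategoryTheory.opHomOfLE h)
  exact hsec ▸ (component p L).subset_hom (Finset.coe_subset.2 h)

theorem component_eq_of_mem (hp : x ∈ component p K) (hq : x ∈ component q K) :
    component p K = component q K := by
  by_contra h
  exact Set.disjoint_left.1 (ComponentCompl.pairwise_disjoint h) hp hq

theorem self_notMem_component (p : G.end) (v : V) : v ∉ component p {v} := fun h =>
  ComponentCompl.notMem_of_mem h (by simp)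

theorem mem_component_of_adj (hx : x ∈ component p {v}) (hxw : G.Adj x w) (hw : w ≠ v) :
    w ∈ component p {v} :=
  ComponentCompl.mem_of_adj x w hx (by simpa using hw) hxw

theorem mem_component_singleton_iff (hG : G.IsAcyclic) (hx : x ∈ component p {v})
    {π : G.Walk x w} (hπ : π.IsPath) : w ∈ component p {v} ↔ v ∉ π.support := by
  rw [mem_iff_of_isPath hG hx hπ]
  refine ⟨fun h hv => h v hv (by simp), fun h z hz hzv => h ?_⟩
  obtain rfl : z = v := by simpa using hzv
  exact hz

theorem exists_adj_mem_component (hG : G.Preconnected) (p : G.end) (v : V) :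
    ∃ w, G.Adj v w ∧ w ∈ component p {v} := by
  obtain ⟨⟨c, k⟩, hc, hk, hadj⟩ := (component p {v}).exists_adj_boundary_pair hG ⟨v, by simp⟩
  obtain rfl : k = v := by simpa using hk
  exact ⟨c, hadj.symm, hc⟩

theorem eq_of_adj_of_mem_component (hG : G.IsTree) (hv : G.Adj v w) (hv' : G.Adj v x)
    (hw : w ∈ component p {v}) (hx : x ∈ component p {v}) : w = x := by
  obtain ⟨π, hπ⟩ := (hG.connected x w).exists_isPath
  have hvπ : v ∉ π.support := (mem_component_singleton_iff hG.isAcyclic hx hπ).1 hw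
  have hpath : (Walk.cons hv'.symm Walk.nil).IsPath := by simp [hv'.ne']
  have := hG.isAcyclic.mem_support_of_ne_mem_support_of_adj_of_isPath hpath hπ hv hvπ
  simpa [hv.ne'] using this

theorem mem_component_iff_notMem_of_adj (hG : G.IsTree) (p : G.end) (hvw : G.Adj v w) :
    w ∈ component p {v} ↔ v ∉ component p {w} := by
  classical
  -- Compare the paths to `v` and to `w` from a vertex on the far side of both.
  obtain ⟨d, hd⟩ := (component p {v, w}).nonempty
  obtain ⟨π, hπ⟩ := (hG.connected d v).exists_isPath
  obtain ⟨σ, hσ⟩ := (hG.connected d w).exists_isPath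
  rw [mem_component_singleton_iff hG.isAcyclic (component_subset p (by simp) hd) hσ,
    mem_component_singleton_iff hG.isAcyclic (component_subset p (by simp) hd) hπ, not_not]
  exact ⟨hG.isAcyclic.mem_support_of_ne_mem_support_of_adj_of_isPath hπ hσ hvw,
    hG.isAcyclic.ne_mem_support_of_support_of_adj_of_isPath hπ hσ hvw⟩

theorem component_eq_of_forall_singleton (hG : G.IsTree)
    (h : ∀ k ∈ K, component p {k} = component q {k}) : component p K = component q K := by
  obtain ⟨x, hx⟩ := (component p K).nonempty
  obtain ⟨y, hy⟩ := (component q K).nonempty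
  obtain ⟨π, hπ⟩ := (hG.connected x y).exists_isPath
  refine component_eq_of_mem (mem_of_walk_avoiding hx π fun z hz hzK => ?_) hy
  have hzK' : {z} ⊆ K := Finset.singleton_subset_iff.2 hzK
  have hxz : x ∈ component p {z} := component_subset p hzK' hx
  have hyz : y ∈ component p {z} := h z hzK ▸ component_subset q hzK' hy
  exact (mem_component_singleton_iff hG.isAcyclic hxz hπ).1 hyz hz

end Component

section Toward

variable {hG : G.IsTree} {p q : G.end} {v w x : V}

/-- The neighbour of `v` in the direction of the end `p`. Thus `p` orients every edge of the tree,
with exactly one edge leaving each vertex, and `p` is recovered from this orientation. With respect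
to a distinguished end `ω`, `toward hG ω v` is the parent of `v`. -/
noncomputable def toward (hG : G.IsTree) (p : G.end) (v : V) : V :=
  (exists_adj_mem_component hG.connected.preconnected p v).choose

theorem adj_toward (hG : G.IsTree) (p : G.end) (v : V) : G.Adj v (toward hG p v) :=
  (exists_adj_mem_component hG.connected.preconnected p v).choose_spec.1

theorem toward_mem_component (hG : G.IsTree) (p : G.end) (v : V) :
    toward hG p v ∈ component p {v} :=
  (exists_adj_mem_component hG.connected.preconnected p v).choose_spec.2

theorem mem_component_iff_toward_eq (hvw : G.Adj v w) :
    w ∈ component p {v} ↔ toward hG p v = w :=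
  ⟨eq_of_adj_of_mem_component hG (adj_toward hG p v) hvw (toward_mem_component hG p v),
    fun h => h ▸ toward_mem_component hG p v⟩

theorem toward_eq_iff_ne_of_adj (hvw : G.Adj v w) : toward hG p v = w ↔ toward hG p w ≠ v := by
  rw [← mem_component_iff_toward_eq hvw, mem_component_iff_notMem_of_adj hG p hvw,
    mem_component_iff_toward_eq (hG := hG) hvw.symm]

theorem toward_eq_or_toward_eq (hG : G.IsTree) (p : G.end) (hvw : G.Adj v w) :
    toward hG p v = w ∨ toward hG p w = v :=
  or_iff_not_imp_right.2 (toward_eq_iff_ne_of_adj hvw).2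

theorem toward_toward_ne (hG : G.IsTree) (p : G.end) (v : V) :
    toward hG p (toward hG p v) ≠ v :=
  (toward_eq_iff_ne_of_adj (adj_toward hG p v)).1 rfl

theorem component_singleton_eq_iff :
    component p {v} = component q {v} ↔ toward hG p v = toward hG q v := by
  refine ⟨fun h => ((mem_component_iff_toward_eq (adj_toward hG q v)).1 ?_), fun h => ?_⟩
  · exact h ▸ toward_mem_component hG q v
  · exact component_eq_of_mem (toward_mem_component hG p v) (h ▸ toward_mem_component hG q v)

theorem component_eq_of_forall_toward_eq {K : Finset V}
    (h : ∀ k ∈ K, toward hG p k = toward hG q k) : component p K = component q K :=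
  component_eq_of_forall_singleton hG fun k hk => component_singleton_eq_iff.2 (h k hk)

theorem toward_injective (hG : G.IsTree) : Injective (toward hG) := fun _ _ h =>
  Subtype.ext <| funext fun _ => component_eq_of_forall_toward_eq fun k _ => congrFun h k

theorem notMem_component_iff_exists_iterate :
    x ∉ component p {v} ↔ ∃ n, (toward hG p)^[n] x = v := by
  constructor
  · obtain ⟨π⟩ := hG.connected x v
    induction π with
    | nil => exact fun _ => ⟨0, rfl⟩
    | @cons x z v hxz π ih =>
      intro hx
      by_cases hxv : x = v
      · exact ⟨0, hxv⟩
      obtain ⟨n, hn⟩ := ih fun hz => hx (mem_component_of_adj hz hxz.symm hxv)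
      rcases toward_eq_or_toward_eq hG p hxz with rfl | rfl
      · exact ⟨n + 1, hn⟩
      · rcases n with - | n
        · obtain rfl : z = v := hn
          exact absurd (toward_mem_component hG p z) hx
        · exact ⟨n, hn⟩
  · rintro ⟨n, hn⟩
    induction n generalizing x with
    | zero => exact hn ▸ self_notMem_component p x
    | succ n ih =>
      intro hx
      by_cases hxv : toward hG p x = v
      · exact (mem_component_iff_notMem_of_adj hG p (adj_toward hG p x)).1
          (toward_mem_component hG p x) (hxv ▸ hx)
      · exact ih hn (mem_component_of_adj hx (adj_toward hG p x) hxv)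

theorem iterate_toward_ne_self (hG : G.IsTree) (p : G.end) (v : V) (n : ℕ) :
    (toward hG p)^[n + 1] v ≠ v := fun h =>
  notMem_component_iff_exists_iterate.2 ⟨n, h⟩ (toward_mem_component hG p v)

theorem iterate_toward_injective (hG : G.IsTree) (p : G.end) (v : V) :
    Injective fun n => (toward hG p)^[n] v := by
  intro m n h
  wlog hmn : m < n generalizing m n
  · rcases eq_or_lt_of_not_gt hmn with rfl | hnm
    · rfl
    · exact (this h.symm hnm).symm
  obtain ⟨k, rfl⟩ := Nat.exists_eq_add_of_lt hmn
  have hk : (toward hG p)^[k + 1] ((toward hG p)^[m] v) = (toward hG p)^[m] v := by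
    rw [← iterate_add_apply, add_comm, ← add_assoc]
    exact h.symm
  exact absurd hk (iterate_toward_ne_self hG p _ k)

theorem exists_iterate_toward_eq (hG : G.IsTree) (p : G.end) (v w : V) :
    ∃ a b, (toward hG p)^[a] v = (toward hG p)^[b] w := by
  obtain ⟨π⟩ := hG.connected v w
  induction π with
  | nil => exact ⟨0, 0, rfl⟩
  | @cons v z w hvz π ih =>
    obtain ⟨a, b, hab⟩ := ih
    rcases toward_eq_or_toward_eq hG p hvz with rfl | rfl
    · exact ⟨a + 1, b, hab⟩
    · refine ⟨a, b + 1, ?_⟩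
      rw [← iterate_succ_apply, iterate_succ_apply', hab, iterate_succ_apply']

theorem three_le_ncard_neighborSet_of_siblings (hfin : (G.neighborSet (toward hG p v)).Finite)
    (hvw : toward hG p v = toward hG p w) (hne : v ≠ w) :
    3 ≤ (G.neighborSet (toward hG p v)).ncard := by
  have hv := toward_toward_ne hG p v
  have hw := hvw ▸ toward_toward_ne hG p w
  rw [← Set.ncard_eq_three.2 ⟨v, w, _, hne, hv.symm, hw.symm, rfl⟩]
  refine Set.ncard_le_ncard ?_ hfin
  rintro x (rfl | rfl | rfl)
  · exact (adj_toward hG p _).symm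
  · exact hvw ▸ (adj_toward hG p _).symm
  · exact adj_toward hG p _

end Toward

section Level

variable {hG : G.IsTree} {ω : G.end} {v₀ v w : V}

theorem exists_level (hG : G.IsTree) (ω : G.end) (v₀ v : V) :
    ∃ l : ℤ, ∀ a b : ℕ, (toward hG ω)^[a] v = (toward hG ω)^[b] v₀ → l = b - a := by
  obtain ⟨c, d, hcd⟩ := exists_iterate_toward_eq hG ω v v₀
  refine ⟨d - c, fun a b hab => ?_⟩
  have : c + b = a + d := iterate_toward_injective hG ω v₀ <| by
    simp only [iterate_add_apply, ← hab, ← hcd]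
    rw [← iterate_add_apply, ← iterate_add_apply, add_comm]
  omega

/-- The Busemann function of the end `ω` normalized at `v₀`: the signed number of generations by
which `v` lies above `v₀`, increasing towards `ω`. It is the combinatorial height of the paper when
`v₀` is the base. -/
noncomputable def level (hG : G.IsTree) (ω : G.end) (v₀ v : V) : ℤ :=
  (exists_level hG ω v₀ v).choose

theorem level_eq_sub {a b : ℕ} (h : (toward hG ω)^[a] v = (toward hG ω)^[b] v₀) :
    level hG ω v₀ v = b - a :=
  (exists_level hG ω v₀ v).choose_spec a b h

@[simp]
theorem level_self (v₀ : V) : level hG ω v₀ v₀ = 0 := by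
  simpa using level_eq_sub (hG := hG) (ω := ω) (v := v₀) (a := 0) (b := 0) rfl

@[simp]
theorem level_iterate_toward (v₀ v : V) (n : ℕ) :
    level hG ω v₀ ((toward hG ω)^[n] v) = level hG ω v₀ v + n := by
  obtain ⟨a, b, h⟩ := exists_iterate_toward_eq hG ω v v₀
  have h' : (toward hG ω)^[a] ((toward hG ω)^[n] v) = (toward hG ω)^[n + b] v₀ := by
    rw [← iterate_add_apply, add_comm, iterate_add_apply, h, iterate_add_apply]
  rw [level_eq_sub h, level_eq_sub h']
  push_cast
  ring

@[simp]
theorem level_toward (v₀ v : V) : level hG ω v₀ (toward hG ω v) = level hG ω v₀ v + 1 := by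
  simpa using level_iterate_toward (hG := hG) (ω := ω) v₀ v 1

theorem level_le_add_one_of_adj (h : G.Adj v w) :
    level hG ω v₀ v ≤ level hG ω v₀ w + 1 := by
  rcases toward_eq_or_toward_eq hG ω h with rfl | rfl <;> simp only [level_toward] <;> omega

theorem exists_iterate_toward_eq_of_level_eq (h : level hG ω v₀ v = level hG ω v₀ w) :
    ∃ a, (toward hG ω)^[a] v = (toward hG ω)^[a] w := by
  obtain ⟨a, b, hab⟩ := exists_iterate_toward_eq hG ω v w
  have hlevel := congrArg (level hG ω v₀) hab
  rw [level_iterate_toward, level_iterate_toward] at hlevel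
  obtain rfl : a = b := by omega
  exact ⟨a, hab⟩

end Level

theorem countable_of_preconnected (hG : G.Preconnected)
    (hnbr : ∀ v, (G.neighborSet v).Countable) : Countable V := by
  have hball : ∀ (n : ℕ) (u : V), {w | ∃ π : G.Walk u w, π.length = n}.Countable := by
    intro n
    induction n with
    | zero =>
      refine fun u => (Set.countable_singleton u).mono ?_
      rintro w ⟨π, hπ⟩
      exact (Walk.eq_of_length_eq_zero hπ).symm
    | succ n ih =>
      refine fun u => ((hnbr u).biUnion fun x _ => ih x).mono ?_
      rintro w ⟨π | ⟨hux, π⟩, hπ⟩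
      · simp at hπ
      · exact Set.mem_biUnion hux ⟨π, by simpa using hπ⟩
  rcases isEmpty_or_nonempty V with _ | ⟨⟨u⟩⟩
  · infer_instance
  refine Set.countable_univ_iff.1 ((Set.countable_iUnion fun n => hball n u).mono fun w _ => ?_)
  obtain ⟨π⟩ := hG u w
  exact Set.mem_iUnion.2 ⟨π.length, π, rfl⟩

end TreeEnd

namespace TreeDyn

open TreeEnd MeasureTheory TopologicalSpace

variable {V : Type} {T : TreeDyn V} {infty : T.G.end}

section Ends

variable {v w k x : V} {p q : T.G.end}

/-- The neighbour of a vertex on its ray to `infty`. -/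
noncomputable abbrev parent (T : TreeDyn V) (infty : T.G.end) : V → V := toward T.isTree infty

theorem below_iff_exists_iterate : T.Below infty v x ↔ ∃ n, (T.parent infty)^[n] x = v := by
  rw [← notMem_component_iff_exists_iterate]
  constructor
  · rintro (rfl | ⟨_, hne⟩)
    · exact self_notMem_component infty x
    · exact fun ⟨_, heq⟩ => hne heq
  · intro hx
    by_cases hxv : x = v
    · exact Or.inl hxv
    · exact Or.inr ⟨by simpa using hxv, fun heq => hx ⟨_, heq⟩⟩

theorem endBelow_iff : T.EndBelow infty v p ↔ toward T.isTree p v ≠ T.parent infty v :=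
  component_singleton_eq_iff.not

theorem endBelow_iff_toward_parent_eq :
    T.EndBelow infty v p ↔ toward T.isTree p (T.parent infty v) = v :=
  endBelow_iff.trans (toward_eq_iff_ne_of_adj (adj_toward T.isTree infty v).symm).symm

theorem EndBelow.parent (h : T.EndBelow infty v p) : T.EndBelow infty (T.parent infty v) p := by
  rw [endBelow_iff, endBelow_iff_toward_parent_eq.1 h]
  exact (toward_toward_ne T.isTree infty v).symm

theorem EndBelow.iterate_parent (h : T.EndBelow infty v p) (n : ℕ) :
    T.EndBelow infty ((T.parent infty)^[n] v) p := by
  induction n with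
  | zero => exact h
  | succ n ih =>
    rw [iterate_succ_apply']
    exact ih.parent

theorem EndBelow.parent_toward (h : T.EndBelow infty v p) :
    T.parent infty (toward T.isTree p v) = v :=
  (toward_eq_or_toward_eq T.isTree infty (adj_toward T.isTree p v)).resolve_left
    (endBelow_iff.1 h).symm

theorem EndBelow.endBelow_toward (h : T.EndBelow infty v p) :
    T.EndBelow infty (toward T.isTree p v) p := by
  rw [endBelow_iff_toward_parent_eq, h.parent_toward]

theorem EndBelow.exists_iterate_parent_eq (h : T.EndBelow infty v p) (n : ℕ) :
    ∃ w, T.EndBelow infty w p ∧ (T.parent infty)^[n] w = v := by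
  induction n with
  | zero => exact ⟨v, h, rfl⟩
  | succ n ih =>
    obtain ⟨w, hw, rfl⟩ := ih
    exact ⟨_, hw.endBelow_toward, by rw [iterate_succ_apply, hw.parent_toward]⟩

theorem EndBelow.eq_of_parent_eq (hv : T.EndBelow infty v p) (hw : T.EndBelow infty w p)
    (h : T.parent infty v = T.parent infty w) : v = w := by
  rw [← endBelow_iff_toward_parent_eq.1 hv, h, endBelow_iff_toward_parent_eq.1 hw]

theorem EndBelow.eq_of_iterate_parent_eq (hv : T.EndBelow infty v p) (hw : T.EndBelow infty w p)
    {n : ℕ} (h : (T.parent infty)^[n] v = (T.parent infty)^[n] w) : v = w := by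
  induction n with
  | zero => exact h
  | succ n ih =>
    rw [iterate_succ_apply', iterate_succ_apply'] at h
    exact ih ((hv.iterate_parent n).eq_of_parent_eq (hw.iterate_parent n) h)

theorem EndBelow.exists_iterate_parent_or (hv : T.EndBelow infty v p)
    (hw : T.EndBelow infty w p) :
    (∃ n, (T.parent infty)^[n] v = w) ∨ ∃ n, (T.parent infty)^[n] w = v := by
  obtain ⟨a, b, hab⟩ := exists_iterate_toward_eq T.isTree infty v w
  rcases le_total a b with h | h <;> obtain ⟨n, rfl⟩ := Nat.exists_eq_add_of_le h <;>
    rw [iterate_add_apply] at hab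
  · exact Or.inr ⟨n, ((hv.eq_of_iterate_parent_eq (hw.iterate_parent n)) hab).symm⟩
  · exact Or.inl ⟨n, (hv.iterate_parent n).eq_of_iterate_parent_eq hw hab⟩

theorem EndBelow.eq_of_level_eq {v₀ : V} (hv : T.EndBelow infty v p) (hw : T.EndBelow infty w p)
    (h : level T.isTree infty v₀ v = level T.isTree infty v₀ w) : v = w :=
  let ⟨_, ha⟩ := exists_iterate_toward_eq_of_level_eq h
  hv.eq_of_iterate_parent_eq hw ha

theorem EndBelow.toward_eq (hp : T.EndBelow infty v p) (hq : T.EndBelow infty v q)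
    (hk : ¬∃ n, (T.parent infty)^[n] k = v) : toward T.isTree p k = toward T.isTree q k := by
  by_cases hkv : ∃ n, (T.parent infty)^[n] v = k
  · obtain ⟨n | n, rfl⟩ := hkv
    · exact absurd ⟨0, rfl⟩ hk
    · rw [iterate_succ_apply', endBelow_iff_toward_parent_eq.1 (hp.iterate_parent n),
        endBelow_iff_toward_parent_eq.1 (hq.iterate_parent n)]
  · have hside : ∀ r, T.EndBelow infty v r → toward T.isTree r k = T.parent infty k :=
      fun r hr => by_contra fun h => (hr.exists_iterate_parent_or (endBelow_iff.2 h)).elim hkv hk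
    exact (hside p hp).trans (hside q hq).symm

theorem exists_endBelow_level_eq (hp : p ≠ infty) (v₀ : V) (m : ℤ) :
    ∃ v, T.EndBelow infty v p ∧ level T.isTree infty v₀ v = m := by
  obtain ⟨v, hv⟩ : ∃ v, T.EndBelow infty v p := by
    by_contra! h
    exact hp (toward_injective T.isTree (funext fun v => not_not.1 (endBelow_iff.not.1 (h v))))
  rcases le_total (level T.isTree infty v₀ v) m with h | h
  · obtain ⟨n, rfl⟩ := Int.le.dest h
    exact ⟨_, hv.iterate_parent n, level_iterate_toward v₀ v n⟩
  · obtain ⟨n, hn⟩ := Int.le.dest h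
    obtain ⟨w, hw, rfl⟩ := hv.exists_iterate_parent_eq n
    rw [level_iterate_toward] at hn
    exact ⟨w, hw, by omega⟩

end Ends

section Topology

variable {v : V} {p q : T.G.end}

theorem isOpen_endBelow (T : TreeDyn V) (infty : T.G.end) (v : V) :
    @IsOpen _ (endTop T.G) {p | T.EndBelow infty v p} := by
  let K : (Finset V)ᵒᵖ := op {v}
  let _ : ∀ K, TopologicalSpace ((componentComplFunctor T.G).obj K) := fun _ => ⊥
  have hcoord : IsOpen ((fun f : ∀ K, (componentComplFunctor T.G).obj K => f K) ⁻¹'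
      {infty.val K}ᶜ) :=
    IsOpen.preimage (continuous_apply K) trivial
  exact ⟨_, hcoord, rfl⟩

theorem exists_endBelow_subset (hp : p ≠ infty) {U : Set T.G.end}
    (hU : @IsOpen _ (endTop T.G) U) (hpU : p ∈ U) :
    ∃ v, T.EndBelow infty v p ∧ {q | T.EndBelow infty v q} ⊆ U := by
  classical
  obtain ⟨v₀⟩ := T.isTree.connected.nonempty
  obtain ⟨W, hW, rfl⟩ := hU
  let _ : ∀ K, TopologicalSpace ((componentComplFunctor T.G).obj K) := fun _ => ⊥
  obtain ⟨I, u, hu, hIW⟩ := isOpen_pi_iff.1 (show IsOpen W from hW) p.val hpU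
  let L : Finset V := I.biUnion fun K => K.unop
  obtain ⟨m, hm⟩ := (L.image (level T.isTree infty v₀)).finite_toSet.bddBelow
  obtain ⟨v, hv, hvm⟩ := exists_endBelow_level_eq hp v₀ (m - 1)
  refine ⟨v, hv, fun q hq => hIW fun K hK => ?_⟩
  have hqp : q.val K = p.val K := by
    refine component_eq_of_forall_toward_eq (hG := T.isTree) (K := K.unop) fun k hk => ?_
    refine EndBelow.toward_eq hq hv ?_
    rintro ⟨n, rfl⟩
    have hmk : m ≤ level T.isTree infty v₀ k :=
      hm (Finset.mem_image_of_mem _ (Finset.mem_biUnion.2 ⟨K, hK, hk⟩))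
    rw [level_iterate_toward] at hvm
    omega
  exact hqp ▸ (hu K hK).2

theorem EndBelow.eq_of_unique_children {S : Set V}
    (hS : ∀ v ∈ S, ∃ z ∈ S, ∀ y, T.parent infty y = v → y = z) (hv : v ∈ S)
    (hp : T.EndBelow infty v p) (hq : T.EndBelow infty v q) : p = q := by
  have hdescend : ∀ n : ℕ, ∃ w ∈ S, T.EndBelow infty w p ∧ T.EndBelow infty w q ∧
      level T.isTree infty v w = -n := by
    intro n
    induction n with
    | zero => exact ⟨v, hv, hp, hq, by simp⟩
    | succ n ih =>
      obtain ⟨w, hw, hwp, hwq, hlevel⟩ := ih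
      obtain ⟨z, hz, huniq⟩ := hS w hw
      obtain rfl := huniq _ hwp.parent_toward
      refine ⟨_, hz, hwp.endBelow_toward, huniq _ hwq.parent_toward ▸ hwq.endBelow_toward, ?_⟩
      rw [← hwp.parent_toward, level_toward] at hlevel
      push_cast
      omega
  refine toward_injective T.isTree (funext fun k => ?_)
  obtain ⟨w, -, hwp, hwq, hlevel⟩ := hdescend (1 - level T.isTree infty v k).toNat
  refine hwp.toward_eq hwq ?_
  rintro ⟨n, rfl⟩
  rw [level_iterate_toward] at hlevel
  omega

theorem isIsolatedEnd_of_unique_children {S : Set V}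
    (hS : ∀ v ∈ S, ∃ z ∈ S, ∀ y, T.parent infty y = v → y = z) (hv : v ∈ S)
    (hp : T.EndBelow infty v p) : IsIsolatedEnd T.G p := by
  have hsingleton : {q | T.EndBelow infty v q} = {p} :=
    Set.eq_singleton_iff_unique_mem.2 ⟨hp, fun q hq => EndBelow.eq_of_unique_children hS hv hq hp⟩
  rw [IsIsolatedEnd, ← hsingleton]
  exact isOpen_endBelow T infty v

end Topology

section Cylinders

variable {v w : V}

/-- The set `J(F, v)` of points of the Julia set lying below the vertex `v`. -/
def cylinder (T : TreeDyn V) (infty : T.G.end) (v : V) : Set (JSet T infty) :=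
  {p | T.EndBelow infty v p.val}

noncomputable instance : TopologicalSpace (JSet T infty) := JTop T infty

noncomputable instance : MeasurableSpace (JSet T infty) := JBorel T infty

instance : BorelSpace (JSet T infty) := ⟨rfl⟩

theorem isOpen_cylinder (v : V) : IsOpen (T.cylinder infty v) :=
  ⟨_, isOpen_endBelow T infty v, rfl⟩

theorem measurableSet_cylinder (v : V) : MeasurableSet (T.cylinder infty v) :=
  (isOpen_cylinder v).measurableSet

theorem cylinder_subset_cylinder_iterate_parent (v : V) (n : ℕ) :
    T.cylinder infty v ⊆ T.cylinder infty ((T.parent infty)^[n] v) :=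
  fun _ hp => EndBelow.iterate_parent hp n

theorem cylinder_subset_cylinder_parent (v : V) :
    T.cylinder infty v ⊆ T.cylinder infty (T.parent infty v) :=
  cylinder_subset_cylinder_iterate_parent v 1

theorem disjoint_cylinder_of_parent_eq (h : T.parent infty v = T.parent infty w) (hne : v ≠ w) :
    Disjoint (T.cylinder infty v) (T.cylinder infty w) :=
  Set.disjoint_left.2 fun _ hv hw => hne (EndBelow.eq_of_parent_eq hv hw h)

theorem disjoint_cylinder_or_exists_iterate (T : TreeDyn V) (infty : T.G.end) (v w : V) :
    Disjoint (T.cylinder infty v) (T.cylinder infty w) ∨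
      (∃ n, (T.parent infty)^[n] v = w) ∨ ∃ n, (T.parent infty)^[n] w = v :=
  or_iff_not_imp_left.2 fun h =>
    let ⟨_, hv, hw⟩ := Set.not_disjoint_iff.1 h
    EndBelow.exists_iterate_parent_or hv hw

theorem isPiSystem_range_cylinder (T : TreeDyn V) (infty : T.G.end) :
    IsPiSystem (Set.range (T.cylinder infty)) := by
  rintro _ ⟨v, rfl⟩ _ ⟨w, rfl⟩ hvw
  rcases disjoint_cylinder_or_exists_iterate T infty v w with h | ⟨n, rfl⟩ | ⟨n, rfl⟩
  · exact absurd h (Set.not_disjoint_iff_nonempty_inter.2 hvw)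
  · exact ⟨v, (Set.inter_eq_left.2 (cylinder_subset_cylinder_iterate_parent v n)).symm⟩
  · exact ⟨w, (Set.inter_eq_right.2 (cylinder_subset_cylinder_iterate_parent w n)).symm⟩

theorem isTopologicalBasis_range_cylinder (T : TreeDyn V) (infty : T.G.end) :
    IsTopologicalBasis (Set.range (T.cylinder infty)) := by
  refine isTopologicalBasis_of_isOpen_of_nhds (by rintro _ ⟨v, rfl⟩; exact isOpen_cylinder v) ?_
  rintro p _ hp ⟨U, hU, rfl⟩
  obtain ⟨v, hv, hvU⟩ := exists_endBelow_subset p.2 hU hp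
  exact ⟨_, ⟨v, rfl⟩, hv, fun q hq => hvU hq⟩

theorem measurableSpace_eq_generateFrom_cylinder (T : TreeDyn V) (infty : T.G.end) :
    (inferInstance : MeasurableSpace (JSet T infty)) =
      MeasurableSpace.generateFrom (Set.range (T.cylinder infty)) := by
  have : Countable V :=
    countable_of_preconnected T.isTree.connected.preconnected fun v => (T.locFin v).countable
  have hbasis := isTopologicalBasis_range_cylinder T infty
  have := hbasis.secondCountableTopology (Set.countable_range _)
  exact hbasis.borel_eq_generateFrom

end Cylinders

section Base

variable {v₀ v : V}

theorem IsBase.level_nonpos (hb : T.IsBase infty v₀) (hv : 3 ≤ (T.G.neighborSet v).ncard) :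
    level T.isTree infty v₀ v ≤ 0 := by
  obtain ⟨n, hn⟩ := below_iff_exists_iterate.1 (hb.2 v hv)
  have hlevel := congrArg (level T.isTree infty v₀) hn
  rw [level_iterate_toward, level_self] at hlevel
  omega

theorem IsBase.exists_iterate_of_level_nonneg (hb : T.IsBase infty v₀)
    (hv : 0 ≤ level T.isTree infty v₀ v) : ∃ n, (T.parent infty)^[n] v₀ = v := by
  obtain ⟨n, hn⟩ := Int.eq_ofNat_of_zero_le hv
  refine ⟨n, ?_⟩
  have hlevel : level T.isTree infty v₀ ((T.parent infty)^[n] v₀) = level T.isTree infty v₀ v := by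
    rw [level_iterate_toward, level_self, zero_add, hn]
  obtain ⟨a, ha⟩ := exists_iterate_toward_eq_of_level_eq hlevel
  induction a with
  | zero => exact ha
  | succ a ih =>
    -- Two distinct siblings at nonnegative level would branch strictly above the base.
    by_contra hne
    rw [iterate_succ_apply', iterate_succ_apply'] at ha
    have hbranch := hb.level_nonpos
      (three_le_ncard_neighborSet_of_siblings (T.locFin _) ha fun h => hne (ih h))
    rw [level_toward, level_iterate_toward, hlevel] at hbranch
    omega

theorem IsMass.eq_one {dV : V → ℕ} {Dg : ℕ} {μ : V → ℚ} (hb : T.IsBase infty v₀)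
    (hμ : T.IsMass infty v₀ dV Dg μ) (hv : 0 ≤ level T.isTree infty v₀ v) : μ v = 1 := by
  obtain ⟨n, rfl⟩ := hb.exists_iterate_of_level_nonneg hv
  refine hμ.1 _ ?_
  rw [height, if_pos (below_iff_exists_iterate.2 ⟨n, rfl⟩)]
  positivity

end Base

/-- The measure `ν` on the Julia set has the values of the mass function on cylinders, where the
mass function is replaced by its two defining properties. The division in the second one is cleared
so that it makes sense for extended nonnegative reals. -/
structure IsMassMeasure (T : TreeDyn V) (infty : T.G.end) (v₀ : V) (dV : V → ℕ) (Dg : ℕ)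
    (ν : Measure (JSet T infty)) : Prop where
  eq_one : ∀ v, 0 ≤ level T.isTree infty v₀ v → ν (T.cylinder infty v) = 1
  mul_cylinder : ∀ v, (Dg : ENNReal) * ν (T.cylinder infty v) =
    dV v * ν (T.cylinder infty (T.F v))

theorem IsMass.isMassMeasure {v₀ : V} {dV : V → ℕ} {Dg : ℕ} {μ : V → ℚ}
    {ν : Measure (JSet T infty)} (hb : T.IsBase infty v₀) (hdV : ∀ v, 0 < dV v)
    (hμ : T.IsMass infty v₀ dV Dg μ)
    (hν : ∀ v, ν (T.cylinder infty v) = ENNReal.ofReal (μ v : ℝ)) :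
    T.IsMassMeasure infty v₀ dV Dg ν where
  eq_one v hv := by simp [hν, hμ.eq_one hb hv]
  mul_cylinder v := by
    have hd : (dV v : ℚ) ≠ 0 := by exact_mod_cast (hdV v).ne'
    have h : (Dg : ℚ) * μ v = dV v * μ (T.F v) := by
      rw [hμ.2]
      field_simp
    have h' : (Dg : ℝ) * μ v = dV v * μ (T.F v) := by exact_mod_cast h
    rw [hν, hν, ← ENNReal.ofReal_natCast, ← ENNReal.ofReal_natCast,
      ← ENNReal.ofReal_mul (Nat.cast_nonneg _), ← ENNReal.ofReal_mul (Nat.cast_nonneg _), h']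

section Reversal

variable {v₀ v w y z : V} {dV : V → ℕ} {Dg : ℕ} {ν : Measure (JSet T infty)}

/-- The edge from `v` to its parent is reversed by `T.F`, i.e. its image points away from
`infty`. -/
def IsReversed (T : TreeDyn V) (infty : T.G.end) (v : V) : Prop :=
  T.F v = T.parent infty (T.F (T.parent infty v))

theorem map_parent_or_isReversed (T : TreeDyn V) (infty : T.G.end) (v : V) :
    T.F (T.parent infty v) = T.parent infty (T.F v) ∨ T.IsReversed infty v :=
  (toward_eq_or_toward_eq T.isTree infty (T.adjMap (adj_toward T.isTree infty v))).imp
    Eq.symm Eq.symm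

theorem IsReversed.exists_child (hv : T.IsReversed infty v) :
    ∃ y, T.parent infty y = v ∧ T.IsReversed infty y := by
  obtain ⟨y, hvy, hy⟩ := T.edgeSurj (adj_toward T.isTree infty (T.F v))
  rcases toward_eq_or_toward_eq T.isTree infty hvy with rfl | rfl
  · rw [IsReversed, hy] at hv
    exact absurd hv.symm (iterate_toward_ne_self T.isTree infty (T.F v) 1)
  · exact ⟨y, rfl, hy⟩

theorem IsReversed.level_map (hv : T.IsReversed infty v) :
    level T.isTree infty v₀ (T.F v) = level T.isTree infty v₀ (T.F (T.parent infty v)) + 1 :=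
  hv ▸ level_toward v₀ _

theorem IsReversed.exists_one_le_level (hv : T.IsReversed infty v) (v₀ : V) :
    ∃ y, T.IsReversed infty y ∧ 1 ≤ level T.isTree infty v₀ (T.F y) := by
  have hdescend : ∀ n : ℕ, ∃ y, T.IsReversed infty y ∧
      level T.isTree infty v₀ (T.F y) = level T.isTree infty v₀ (T.F v) + n := by
    intro n
    induction n with
    | zero => exact ⟨v, hv, by simp⟩
    | succ n ih =>
      obtain ⟨w, hw, hlevel⟩ := ih
      obtain ⟨y, rfl, hy⟩ := hw.exists_child
      refine ⟨y, hy, ?_⟩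
      rw [hy.level_map, hlevel]
      push_cast
      ring
  obtain ⟨y, hy, hlevel⟩ := hdescend (1 - level T.isTree infty v₀ (T.F v)).toNat
  exact ⟨y, hy, by omega⟩

theorem level_map_parent_le (v₀ v : V) :
    level T.isTree infty v₀ (T.F (T.parent infty v)) ≤ level T.isTree infty v₀ (T.F v) + 1 :=
  level_le_add_one_of_adj (T.adjMap (adj_toward T.isTree infty v).symm)

theorem IsMassMeasure.mul_cylinder_eq (hν : T.IsMassMeasure infty v₀ dV Dg ν)
    (hv : 0 ≤ level T.isTree infty v₀ (T.F v)) :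
    (Dg : ENNReal) * ν (T.cylinder infty v) = dV v := by
  rw [hν.mul_cylinder, hν.eq_one _ hv, mul_one]

theorem IsMassMeasure.mul_cylinder_ne_zero (hν : T.IsMassMeasure infty v₀ dV Dg ν)
    (hdV : 0 < dV v) (hv : 0 ≤ level T.isTree infty v₀ (T.F v)) :
    (Dg : ENNReal) * ν (T.cylinder infty v) ≠ 0 := by
  rw [hν.mul_cylinder_eq hv]
  exact_mod_cast hdV.ne'

theorem IsMassMeasure.le_of_parent_eq (hν : T.IsMassMeasure infty v₀ dV Dg ν)
    (hy : T.parent infty y = v) (hFv : 0 ≤ level T.isTree infty v₀ (T.F v))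
    (hFy : 0 ≤ level T.isTree infty v₀ (T.F y)) : dV y ≤ dV v := by
  suffices h : (dV y : ENNReal) ≤ dV v by exact_mod_cast h
  rw [← hν.mul_cylinder_eq hFv, ← hν.mul_cylinder_eq hFy]
  gcongr
  exact hy ▸ cylinder_subset_cylinder_parent y

theorem IsMassMeasure.add_le_of_siblings (hν : T.IsMassMeasure infty v₀ dV Dg ν)
    (hy : T.parent infty y = v) (hz : T.parent infty z = v) (hyz : y ≠ z)
    (hFv : 0 ≤ level T.isTree infty v₀ (T.F v)) (hFy : 0 ≤ level T.isTree infty v₀ (T.F y))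
    (hFz : 0 ≤ level T.isTree infty v₀ (T.F z)) : dV y + dV z ≤ dV v := by
  suffices h : (dV y + dV z : ENNReal) ≤ dV v by exact_mod_cast h
  rw [← hν.mul_cylinder_eq hFv, ← hν.mul_cylinder_eq hFy, ← hν.mul_cylinder_eq hFz, ← mul_add,
    ← measure_union (disjoint_cylinder_of_parent_eq (hy.trans hz.symm) hyz)
      (measurableSet_cylinder z)]
  gcongr
  exact Set.union_subset (hy ▸ cylinder_subset_cylinder_parent y)
    (hz ▸ cylinder_subset_cylinder_parent z)

/-- Far enough below a reversed edge, the degrees are the masses of the cylinders up to the factor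
`Dg`. A vertex of minimal degree among the reversed ones there has a reversed child that takes up
its whole mass, hence is its only child, and so on: the end reached in this way is isolated. -/
theorem IsMassMeasure.not_isReversed (hν : T.IsMassMeasure infty v₀ dV Dg ν)
    (hdV : ∀ v, 0 < dV v) (hiso : ∀ e, IsIsolatedEnd T.G e → e = infty) (v : V) :
    ¬T.IsReversed infty v := by
  intro hv
  let R : Set V := {y | T.IsReversed infty y ∧ 1 ≤ level T.isTree infty v₀ (T.F y)}
  have hR : R.Nonempty := hv.exists_one_le_level v₀
  let S : Set V := {y ∈ R | ∀ z ∈ R, dV y ≤ dV z}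
  obtain ⟨s, hs⟩ : S.Nonempty := by
    obtain ⟨s, hs, hmin⟩ := exists_minimalFor_of_wellFoundedLT (· ∈ R) dV hR
    exact ⟨s, hs, fun z hz => (le_total (dV s) (dV z)).elim id (hmin hz)⟩
  have hchild : ∀ v ∈ S, ∃ z ∈ S, ∀ y, T.parent infty y = v → y = z := by
    rintro v ⟨⟨hv, hFv⟩, hmin⟩
    obtain ⟨z, hzv, hz⟩ := hv.exists_child
    have hFz : 1 ≤ level T.isTree infty v₀ (T.F z) := by
      rw [hz.level_map, hzv]
      omega
    have hdz : dV z ≤ dV v := hν.le_of_parent_eq hzv (by omega) (by omega)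
    refine ⟨z, ⟨⟨hz, hFz⟩, fun u hu => hdz.trans (hmin u hu)⟩, fun y hy => ?_⟩
    by_contra hyz
    have hFy := level_map_parent_le (T := T) (infty := infty) v₀ y
    rw [hy] at hFy
    have hsum := hν.add_le_of_siblings hy hzv hyz (by omega) (by omega) (by omega)
    have := hmin z ⟨hz, hFz⟩
    have := hdV y
    omega
  have hFs : 0 ≤ level T.isTree infty v₀ (T.F s) := zero_le_one.trans hs.1.2
  obtain ⟨p, hp⟩ := nonempty_of_measure_ne_zero
    (right_ne_zero_of_mul (hν.mul_cylinder_ne_zero (hdV s) hFs))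
  exact p.2 (hiso p.val (isIsolatedEnd_of_unique_children hchild hs hp))

theorem IsMassMeasure.commute_parent (hν : T.IsMassMeasure infty v₀ dV Dg ν)
    (hdV : ∀ v, 0 < dV v) (hiso : ∀ e, IsIsolatedEnd T.G e → e = infty) :
    Function.Commute T.F (T.parent infty) :=
  fun v => (map_parent_or_isReversed T infty v).resolve_right (hν.not_isReversed hdV hiso v)

end Reversal

section Levels

variable {v₀ : V}

theorem level_map (hcomm : Function.Commute T.F (T.parent infty)) (v₀ v : V) :
    level T.isTree infty v₀ (T.F v) =
      level T.isTree infty v₀ v + level T.isTree infty v₀ (T.F v₀) := by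
  obtain ⟨a, b, hab⟩ := exists_iterate_toward_eq T.isTree infty v v₀
  have h := congrArg (fun z => level T.isTree infty v₀ (T.F z)) hab
  simp only [(hcomm.iterate_right _).eq, level_iterate_toward] at h
  rw [level_eq_sub hab]
  omega

theorem level_iterate_map (hcomm : Function.Commute T.F (T.parent infty)) (v₀ v : V) (n : ℕ) :
    level T.isTree infty v₀ (T.F^[n] v) =
      level T.isTree infty v₀ v + n * level T.isTree infty v₀ (T.F v₀) := by
  induction n with
  | zero => simp
  | succ n ih =>
    rw [iterate_succ_apply', level_map hcomm, ih]
    push_cast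
    ring

theorem ncard_neighborSet_map_le (T : TreeDyn V) (v : V) :
    (T.G.neighborSet (T.F v)).ncard ≤ (T.G.neighborSet v).ncard := by
  have hsub : T.G.neighborSet (T.F v) ⊆ T.F '' T.G.neighborSet v := fun _ hw => T.edgeSurj hw
  exact (Set.ncard_le_ncard hsub ((T.locFin v).image _)).trans (Set.ncard_image_le (T.locFin v))

/-- Otherwise a strict ancestor of `v₀` maps to `v₀`, hence has valence at least three. -/
theorem IsBase.level_map_base_nonneg (hb : T.IsBase infty v₀)
    (hcomm : Function.Commute T.F (T.parent infty)) :
    0 ≤ level T.isTree infty v₀ (T.F v₀) := by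
  by_contra! hneg
  obtain ⟨k, hk⟩ := Int.eq_ofNat_of_zero_le (neg_nonneg.2 hneg.le)
  let u := (T.parent infty)^[k] v₀
  have hu : level T.isTree infty v₀ u = k := by simp [u]
  have hFu : level T.isTree infty v₀ (T.F u) = 0 := by
    rw [level_map hcomm, hu]
    omega
  have hFu_eq : T.F u = v₀ := by
    obtain ⟨n, hn⟩ := hb.exists_iterate_of_level_nonneg hFu.ge
    obtain rfl : n = 0 := by simpa [← hn] using hFu
    exact hn.symm
  have := hb.level_nonpos (hb.1.trans (hFu_eq ▸ ncard_neighborSet_map_le T u))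
  omega

/-- If levels were preserved, the grand orbit of the parent of `v₀` would stay above the base. -/
theorem IsBase.level_map_base_pos (hb : T.IsBase infty v₀)
    (hcomm : Function.Commute T.F (T.parent infty))
    (horbit : ∀ v, ∃ w, T.GrandOrbit v w ∧ 3 ≤ (T.G.neighborSet w).ncard) :
    0 < level T.isTree infty v₀ (T.F v₀) := by
  refine (hb.level_map_base_nonneg hcomm).lt_of_ne' fun hzero => ?_
  obtain ⟨w, ⟨n, m, -, -, hnm⟩, hw⟩ := horbit (T.parent infty v₀)
  have hlevel := congrArg (level T.isTree infty v₀) hnm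
  simp only [level_iterate_map hcomm, hzero, level_toward, level_self, mul_zero, add_zero]
    at hlevel
  have := hb.level_nonpos hw
  omega

end Levels

section Degrees

variable {dV : V → ℕ} {dE : V → V → ℕ} {v c y : V}

/-- The finite set of children of `v` that `T.F` maps to `c`. -/
noncomputable def childrenOver (T : TreeDyn V) (infty : T.G.end) (v c : V) : Finset V :=
  ((T.finFibers c).subset fun _ hy => hy.2 :
    {y | T.parent infty y = v ∧ T.F y = c}.Finite).toFinset

@[simp]
theorem mem_childrenOver :
    y ∈ T.childrenOver infty v c ↔ T.parent infty y = v ∧ T.F y = c := by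
  simp [childrenOver]

theorem mem_childrenOver_iff_adj (hcomm : Function.Commute T.F (T.parent infty))
    (hc : T.parent infty c = T.F v) :
    y ∈ T.childrenOver infty v c ↔ T.G.Adj v y ∧ T.F y = c := by
  rw [mem_childrenOver, and_congr_left_iff]
  refine fun hy => ⟨fun h => h ▸ (adj_toward T.isTree infty y).symm, fun hvy => ?_⟩
  rcases toward_eq_or_toward_eq T.isTree infty hvy with rfl | h
  · rw [← hy, hcomm] at hc
    exact absurd hc (iterate_toward_ne_self T.isTree infty (T.F v) 1)
  · exact h

theorem IsLocalDeg.vertex_eq_edge (hdeg : T.IsLocalDeg dV dE)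
    (hcomm : Function.Commute T.F (T.parent infty)) (y : V) :
    dV y = dE (T.parent infty y) y := by
  have hset : {w | T.G.Adj y w ∧ T.F w = T.F (T.parent infty y)} = {T.parent infty y} := by
    refine Set.eq_singleton_iff_unique_mem.2 ⟨⟨adj_toward T.isTree infty y, rfl⟩, ?_⟩
    rintro w ⟨hyw, hw⟩
    rcases toward_eq_or_toward_eq T.isTree infty hyw with rfl | rfl
    · rfl
    · rw [hcomm, hcomm] at hw
      exact absurd hw.symm (iterate_toward_ne_self T.isTree infty (T.F w) 1)
  rw [hdeg.2.2.2.2 (adj_toward T.isTree infty y), hset, finsum_mem_singleton, hdeg.1]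

theorem IsLocalDeg.sum_childrenOver (hdeg : T.IsLocalDeg dV dE)
    (hcomm : Function.Commute T.F (T.parent infty)) (hc : T.parent infty c = T.F v) :
    ∑ y ∈ T.childrenOver infty v c, dV y = dV v := by
  have hvc : T.G.Adj (T.F v) c := hc ▸ (adj_toward T.isTree infty c).symm
  obtain ⟨w, hvw, rfl⟩ := T.edgeSurj hvc
  rw [hdeg.2.2.2.2 hvw, ← finsum_mem_coe_finset]
  refine finsum_mem_congr (Set.ext fun y => mem_childrenOver_iff_adj hcomm hc) fun y hy => ?_
  rw [hdeg.vertex_eq_edge hcomm, (mem_childrenOver.1 ((mem_childrenOver_iff_adj hcomm hc).2 hy)).1]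

end Degrees

section BoundaryMap

variable {FJ : JSet T infty → JSet T infty} {dV : V → ℕ} {dE : V → V → ℕ} {v₀ v w : V} {Dg : ℕ}
  {ν : Measure (JSet T infty)} {k : ℕ} {A : Set (JSet T infty)}

/-- `FJ` is the map induced by `T.F` on the Julia set: it sends the points below `v` below
`T.F v`. -/
def IsBoundaryMap (T : TreeDyn V) (infty : T.G.end) (FJ : JSet T infty → JSet T infty) : Prop :=
  ∀ v, Set.MapsTo FJ (T.cylinder infty v) (T.cylinder infty (T.F v))

namespace IsBoundaryMap

theorem preimage_cylinder (hFJ : T.IsBoundaryMap infty FJ)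
    (hcomm : Function.Commute T.F (T.parent infty)) (w : V) :
    FJ ⁻¹' T.cylinder infty w = ⋃ u ∈ {u | T.F u = w}, T.cylinder infty u := by
  refine subset_antisymm (fun p hp => ?_) (Set.iUnion₂_subset ?_)
  · obtain ⟨u, hu, hlevel⟩ := exists_endBelow_level_eq p.2 w (-level T.isTree infty w (T.F w))
    refine Set.mem_biUnion (EndBelow.eq_of_level_eq (v₀ := w) (hFJ u hu) hp ?_) hu
    rw [level_map hcomm, hlevel, level_self, neg_add_cancel]
  · rintro u rfl
    exact hFJ u

theorem continuous (hFJ : T.IsBoundaryMap infty FJ)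
    (hcomm : Function.Commute T.F (T.parent infty)) : Continuous FJ := by
  refine (isTopologicalBasis_range_cylinder T infty).continuous_iff.2 ?_
  rintro _ ⟨w, rfl⟩
  rw [hFJ.preimage_cylinder hcomm]
  exact isOpen_biUnion fun u _ => isOpen_cylinder u

theorem cylinder_inter_preimage_eq_biUnion (hFJ : T.IsBoundaryMap infty FJ)
    (hcomm : Function.Commute T.F (T.parent infty))
    (hk : T.parent infty ((T.parent infty)^[k] w) = T.F v) :
    T.cylinder infty v ∩ FJ ⁻¹' T.cylinder infty w =
      ⋃ y ∈ T.childrenOver infty v ((T.parent infty)^[k] w),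
        T.cylinder infty y ∩ FJ ⁻¹' T.cylinder infty w := by
  refine subset_antisymm (fun p hp => ?_) (Set.iUnion₂_subset fun y hy => ?_)
  · obtain ⟨y, hy, rfl⟩ := EndBelow.exists_iterate_parent_eq hp.1 1
    refine Set.mem_biUnion (x := y) (mem_childrenOver.2 ⟨rfl, ?_⟩) ⟨hy, hp.2⟩
    refine EndBelow.eq_of_parent_eq (hFJ y hy) (EndBelow.iterate_parent hp.2 k) ?_
    rw [hk]
    exact (hcomm y).symm
  · obtain ⟨rfl, -⟩ := mem_childrenOver.1 hy
    exact Set.inter_subset_inter_left _ (cylinder_subset_cylinder_parent y)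

theorem measure_cylinder_inter_preimage_cylinder_of_iterate (hFJ : T.IsBoundaryMap infty FJ)
    (hcomm : Function.Commute T.F (T.parent infty)) (hdeg : T.IsLocalDeg dV dE)
    (hν : T.IsMassMeasure infty v₀ dV Dg ν) (hk : (T.parent infty)^[k] w = T.F v) :
    (Dg : ENNReal) * ν (T.cylinder infty v ∩ FJ ⁻¹' T.cylinder infty w) =
      dV v * ν (T.cylinder infty w) := by
  induction k generalizing v with
  | zero =>
    obtain rfl : w = T.F v := hk
    rw [Set.inter_eq_left.2 (hFJ v).subset_preimage, hν.mul_cylinder]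
  | succ k ih =>
    rw [iterate_succ_apply'] at hk
    rw [hFJ.cylinder_inter_preimage_eq_biUnion hcomm hk, measure_biUnion_finset, Finset.mul_sum,
      Finset.sum_congr rfl fun y hy => ih (mem_childrenOver.1 hy).2.symm, ← Finset.sum_mul,
      ← Nat.cast_sum, hdeg.sum_childrenOver hcomm hk]
    · intro y hy z hz hyz
      have hparent := (mem_childrenOver.1 hy).1.trans (mem_childrenOver.1 hz).1.symm
      exact (disjoint_cylinder_of_parent_eq hparent hyz).mono Set.inter_subset_left
        Set.inter_subset_left
    · exact fun y _ => (measurableSet_cylinder y).inter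
        ((hFJ.continuous hcomm).measurable (measurableSet_cylinder w))

theorem measure_cylinder_inter_preimage_cylinder (hFJ : T.IsBoundaryMap infty FJ)
    (hcomm : Function.Commute T.F (T.parent infty)) (hdeg : T.IsLocalDeg dV dE)
    (hν : T.IsMassMeasure infty v₀ dV Dg ν) (v w : V) :
    (Dg : ENNReal) * ν (T.cylinder infty v ∩ FJ ⁻¹' T.cylinder infty w) =
      dV v * ν (T.cylinder infty (T.F v) ∩ T.cylinder infty w) := by
  rcases disjoint_cylinder_or_exists_iterate T infty (T.F v) w with h | ⟨k, rfl⟩ | ⟨k, hk⟩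
  · have hempty : T.cylinder infty v ∩ FJ ⁻¹' T.cylinder infty w = ∅ :=
      ((h.preimage FJ).mono_left (hFJ v)).inter_eq
    rw [hempty, h.inter_eq, measure_empty, mul_zero, mul_zero]
  · have hsub := cylinder_subset_cylinder_iterate_parent (infty := infty) (T.F v) k
    rw [Set.inter_eq_left.2 hsub, Set.inter_eq_left.2 ((hFJ v).mono_right hsub).subset_preimage,
      hν.mul_cylinder]
  · have hsub : T.cylinder infty w ⊆ T.cylinder infty (T.F v) :=
      hk ▸ cylinder_subset_cylinder_iterate_parent w k
    rw [Set.inter_eq_right.2 hsub,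
      hFJ.measure_cylinder_inter_preimage_cylinder_of_iterate hcomm hdeg hν hk]

theorem measure_cylinder_inter_preimage [IsFiniteMeasure ν] (hFJ : T.IsBoundaryMap infty FJ)
    (hcomm : Function.Commute T.F (T.parent infty)) (hdeg : T.IsLocalDeg dV dE)
    (hν : T.IsMassMeasure infty v₀ dV Dg ν) (v : V) (hA : MeasurableSet A) :
    (Dg : ENNReal) * ν (T.cylinder infty v ∩ FJ ⁻¹' A) =
      dV v * ν (T.cylinder infty (T.F v) ∩ A) := by
  have hmeas : Measurable FJ := (hFJ.continuous hcomm).measurable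
  have : IsFiniteMeasure ((Dg : ENNReal) • (ν.restrict (T.cylinder infty v)).map FJ) :=
    Measure.smul_finite _ (ENNReal.natCast_ne_top Dg)
  have hext : (Dg : ENNReal) • (ν.restrict (T.cylinder infty v)).map FJ =
      (dV v : ENNReal) • ν.restrict (T.cylinder infty (T.F v)) := by
    refine ext_of_generate_finite _ (measurableSpace_eq_generateFrom_cylinder T infty)
      (isPiSystem_range_cylinder T infty) ?_ (by simp [hmeas, hν.mul_cylinder])
    rintro _ ⟨w, rfl⟩
    have hw : MeasurableSet (T.cylinder infty w) := measurableSet_cylinder w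
    simpa [Measure.map_apply hmeas hw, Measure.restrict_apply (hmeas hw),
      Measure.restrict_apply hw, Set.inter_comm] using
      hFJ.measure_cylinder_inter_preimage_cylinder hcomm hdeg hν v w
  simpa [Measure.map_apply hmeas hA, Measure.restrict_apply (hmeas hA),
    Measure.restrict_apply hA, Set.inter_comm] using congrArg (fun m => m A) hext

theorem measure_cylinder_inter_of_preimage_eq [IsProbabilityMeasure ν]
    (hFJ : T.IsBoundaryMap infty FJ) (hcomm : Function.Commute T.F (T.parent infty))
    (hpos : 0 < level T.isTree infty v₀ (T.F v₀)) (hdeg : T.IsLocalDeg dV dE)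
    (hν : T.IsMassMeasure infty v₀ dV Dg ν) (hA : MeasurableSet A) (hinv : FJ ⁻¹' A = A) (v : V) :
    ν (T.cylinder infty v ∩ A) = ν (T.cylinder infty v) * ν A := by
  have hDg : (Dg : ENNReal) ≠ 0 :=
    left_ne_zero_of_mul (hν.mul_cylinder_ne_zero (hdeg.2.1 v₀) hpos.le)
  have hpull : ∀ (n : ℕ) (v : V), 0 ≤ level T.isTree infty v₀ (T.F^[n] v) →
      ν (T.cylinder infty v ∩ A) = ν (T.cylinder infty v) * ν A := by
    intro n
    induction n with
    | zero =>
      intro v hv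
      have hone : ν (T.cylinder infty v) = 1 := hν.eq_one v hv
      rw [hone, one_mul, Set.inter_comm]
      exact measure_inter_conull ((prob_compl_eq_zero_iff (measurableSet_cylinder v)).2 hone)
    | succ n ih =>
      intro v hv
      refine (ENNReal.mul_right_inj hDg (ENNReal.natCast_ne_top Dg)).1 ?_
      calc (Dg : ENNReal) * ν (T.cylinder infty v ∩ A)
          = dV v * ν (T.cylinder infty (T.F v) ∩ A) := by
            simpa only [hinv] using hFJ.measure_cylinder_inter_preimage hcomm hdeg hν v hA
        _ = Dg * (ν (T.cylinder infty v) * ν A) := by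
            rw [ih (T.F v) hv, ← mul_assoc, ← hν.mul_cylinder, mul_assoc]
  refine hpull (level T.isTree infty v₀ v).natAbs v ?_
  rw [level_iterate_map hcomm]
  nlinarith [neg_abs_le (level T.isTree infty v₀ v),
    Int.natCast_natAbs (level T.isTree infty v₀ v)]

end IsBoundaryMap

end BoundaryMap

end TreeDyn

open MeasureTheory in
/-- **Ergodicity of the invariant measure.**
Let `F : T → T` be a polynomial-like branched covering with local degree
function `(dV, dE)`, global degree `Dg`, base `v₀` and mass function `μ`;
let `FJ` be the induced boundary map on the Julia set `J(F) = ∂T ∖ {infty}`,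
and let `ν` be the Borel probability measure on `J(F)` with
`ν (J(F,v)) = μ v` for all vertices `v`, invariant under `FJ`.  Then
`(FJ, J(F), ν)` is ergodic: every Borel set `A` with `FJ⁻¹ A = A` has
measure `0` or `1`. -/
theorem invariant_measure_ergodic
    {V : Type} (T : TreeDyn V) (infty : T.G.end)
    (hpl : T.IsPolyLike infty)
    (dV : V → ℕ) (dE : V → V → ℕ) (hdeg : T.IsLocalDeg dV dE)
    (v₀ : V) (hbase : T.IsBase infty v₀)
    (Dg : ℕ) (hDg : T.IsGlobalDeg dE Dg)
    (μ : V → ℚ) (hμ : T.IsMass infty v₀ dV Dg μ)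
    (FJ : JSet T infty → JSet T infty)
    (hFJ : ∀ (p : JSet T infty) (v : V),
      T.EndBelow infty v p.val → T.EndBelow infty (T.F v) (FJ p).val)
    (ν : @Measure (JSet T infty) (JBorel T infty))
    (hprob : @IsProbabilityMeasure (JSet T infty) (JBorel T infty) ν)
    (hval : ∀ v : V, ν {p : JSet T infty | T.EndBelow infty v p.val} =
      ENNReal.ofReal ((μ v : ℝ)))
    (hinv : ∀ A : Set (JSet T infty),
      @MeasurableSet (JSet T infty) (JBorel T infty) A → ν (FJ ⁻¹' A) = ν A) :
    ∀ A : Set (JSet T infty),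
      @MeasurableSet (JSet T infty) (JBorel T infty) A → FJ ⁻¹' A = A →
        ν A = 0 ∨ ν A = 1 := by
  intro A hA hAinv
  have hdV : ∀ v, 0 < dV v := hdeg.2.1
  have hν : T.IsMassMeasure infty v₀ dV Dg ν := hμ.isMassMeasure hbase hdV hval
  have hcomm : Function.Commute T.F (T.parent infty) := hν.commute_parent hdV hpl.2.2.1
  have hpos : 0 < TreeEnd.level T.isTree infty v₀ (T.F v₀) :=
    hbase.level_map_base_pos hcomm hpl.2.2.2.2
  have hbdry : T.IsBoundaryMap infty FJ := fun v p hp => hFJ p v hp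
  refine measure_eq_zero_or_one_of_forall_inter_eq_mul
    (TreeDyn.measurableSpace_eq_generateFrom_cylinder T infty)
    (TreeDyn.isPiSystem_range_cylinder T infty) ?_
  rintro _ ⟨v, rfl⟩
  exact hbdry.measure_cylinder_inter_of_preimage_eq hcomm hpos hdeg hν hA hAinv v
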